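/- Fix integers d ≥ 1, r ≥ 0 and a strict partition λ with d parts such that λ_i ≤ r + 2d − 2i + 1 for all i. Then the word a^λ = (c_1, …, c_{ℓ−N}) is a reduced word of the element (w^λ)^{−1} w^{(d,r)} = s_{c_1} s_{c_2} ⋯ s_{c_{ℓ−N}} ∈ W(B_{d+r}), and ℓ(w^λ) = |λ| = N. -/

import Mathlib

open scoped BigOperators

namespace BST

/-- `lam` (1-indexed, with `d` parts) is a strict partition: strictly decreasing
positive parts `lam 1 > lam 2 > ⋯ > lam d > 0`. -/
def IsStrictPartition (d : ℕ) (lam : ℕ → ℕ) : Prop :=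
  (∀ i : ℕ, 1 ≤ i → i < d → lam (i + 1) < lam i) ∧ 1 ≤ lam d

/-- The size `|λ| = λ_1 + ⋯ + λ_d`. -/
def sizeP (d : ℕ) (lam : ℕ → ℕ) : ℕ := ∑ i ∈ Finset.Icc 1 d, lam i

/-- The shifted diagram `D(λ) ⊆ ℤ × ℤ`: row `i` (1 ≤ i ≤ d) occupies columns
`i - d, …, λ_i + i - d - 1`. -/
def Diagram (d : ℕ) (lam : ℕ → ℕ) : Set (ℤ × ℤ) :=
  {p : ℤ × ℤ | 1 ≤ p.1 ∧ p.1 ≤ (d : ℤ) ∧ p.1 - (d : ℤ) ≤ p.2 ∧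
    p.2 + (d : ℤ) + 1 ≤ (lam p.1.toNat : ℤ) + p.1}

/-- The hook `H(i,c)`. -/
def Hook (d : ℕ) (lam : ℕ → ℕ) (i c : ℤ) : Set (ℤ × ℤ) :=
  {(i, c)} ∪ {p ∈ Diagram d lam | (p.1 = i ∧ c < p.2) ∨ (p.2 = c ∧ i < p.1)} ∪
    {p ∈ Diagram d lam | c < 0 ∧ p.1 = (d : ℤ) + 1 + c}

/-- The extended hook `H̃(i,c)`. -/
def ExtHook (d : ℕ) (lam : ℕ → ℕ) (i c : ℤ) : Set (ℤ × ℤ) :=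
  Hook d lam i c ∪ {p : ℤ × ℤ | c < 0 ∧ p = ((d : ℤ) + 1 + c, c)}

/-- The extended diagram `D(λ) ∪ {(i, i - d - 1) : 1 ≤ i ≤ d}`. -/
def ExtDiagram (d : ℕ) (lam : ℕ → ℕ) : Set (ℤ × ℤ) :=
  Diagram d lam ∪ {p : ℤ × ℤ | 1 ≤ p.1 ∧ p.1 ≤ (d : ℤ) ∧ p.2 = p.1 - ((d : ℤ) + 1)}

/-- The extended filling `B̃`, with `B̃(i, i - d - 1) = B(i, 0)`. -/
def ExtFilling (d : ℕ) (B : ℤ × ℤ → ℕ) : ℤ × ℤ → ℕ :=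
  fun p => if p.2 = p.1 - ((d : ℤ) + 1) then B (p.1, 0) else B p

/-- The rank function `rk(i,c)`. -/
def rk (d : ℕ) (lam : ℕ → ℕ) (i c : ℤ) : ℤ :=
  if 0 ≤ c then (lam i.toNat : ℤ) - d + i - c
  else (lam i.toNat : ℤ) - d + i + (lam ((d : ℤ) + 1 + c).toNat : ℤ) + c + 1

/-- A bijective filling of `D(λ)` with `1, …, |λ|` (normalized to be `0` off the diagram). -/
def IsFilling (d : ℕ) (lam : ℕ → ℕ) (B : ℤ × ℤ → ℕ) : Prop :=
  Set.BijOn B (Diagram d lam) (Set.Icc 1 (sizeP d lam)) ∧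
    ∀ p : ℤ × ℤ, p ∉ Diagram d lam → B p = 0

/-- A balanced shifted tableau: a bijective filling such that at each box `(i,c)`,
`B(i,c)` is the `rk(i,c)`-th largest entry of the multiset of values of `B̃` on the
extended hook, i.e. exactly `rk(i,c) - 1` boxes of the extended hook carry a value
strictly larger than `B(i,c)`. -/
def IsBalanced (d : ℕ) (lam : ℕ → ℕ) (B : ℤ × ℤ → ℕ) : Prop :=
  IsFilling d lam B ∧ ∀ p ∈ Diagram d lam,
    ({q ∈ ExtHook d lam p.1 p.2 | B p < ExtFilling d B q}.ncard : ℤ) =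
      rk d lam p.1 p.2 - 1

/-- A standard Young tableau of shifted shape `λ`. -/
def IsSYT (d : ℕ) (lam : ℕ → ℕ) (B : ℤ × ℤ → ℕ) : Prop :=
  IsFilling d lam B ∧ ∀ p ∈ Diagram d lam, ∀ q ∈ Diagram d lam,
    ((p.1 = q.1 ∧ p.2 < q.2) → B p < B q) ∧ ((p.2 = q.2 ∧ p.1 < q.1) → B p < B q)

/-- The simple reflections of `W(B_n)`, acting on `ℤ`: `s 0` swaps `1 ↔ -1`,
and `s a` (for `a ≥ 1`) swaps `a ↔ a+1` and `-a ↔ -(a+1)`. -/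
def sB (a : ℕ) : Equiv.Perm ℤ :=
  if a = 0 then Equiv.swap 1 (-1)
  else Equiv.swap (a : ℤ) ((a : ℤ) + 1) * Equiv.swap (-(a : ℤ)) (-(a : ℤ) - 1)

/-- The product `s_{a_1} s_{a_2} ⋯ s_{a_m}` of a word. -/
def wordProd (L : List ℕ) : Equiv.Perm ℤ := (L.map sB).prod

/-- A signed permutation in `W(B_n)`: odd, and the identity beyond `n`. -/
def IsSignedPerm (n : ℕ) (w : Equiv.Perm ℤ) : Prop :=
  (∀ i : ℤ, w (-i) = -(w i)) ∧ ∀ i : ℤ, (n : ℤ) < |i| → w i = i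

/-- The Coxeter length of `w` in `W(B_n)`. -/
noncomputable def lengthB (n : ℕ) (w : Equiv.Perm ℤ) : ℕ :=
  sInf {m : ℕ | ∃ L : List ℕ, (∀ a ∈ L, a < n) ∧ wordProd L = w ∧ L.length = m}

/-- `L` is a reduced word of `w` in `W(B_n)`. -/
def IsReducedWord (n : ℕ) (w : Equiv.Perm ℤ) (L : List ℕ) : Prop :=
  (∀ a ∈ L, a < n) ∧ wordProd L = w ∧ L.length = lengthB n w

/-- The vector `e_k` (for `k ≥ 1` the `k`-th standard basis vector, with the
conventions `e 0 = 0` and `e (-k) = - e k`), represented as an odd function `ℤ → ℤ`. -/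
def eVec (k : ℤ) : ℤ → ℤ :=
  fun t => if t = 0 then 0 else if t = k then 1 else if t = -k then -1 else 0

/-- The positive roots of type `B_n`. -/
def PosRoots (n : ℕ) : Set (ℤ → ℤ) :=
  {v | (∃ i j : ℤ, 1 ≤ i ∧ i < j ∧ j ≤ (n : ℤ) ∧
        (v = eVec j - eVec i ∨ v = eVec j + eVec i)) ∨
       (∃ i : ℤ, 1 ≤ i ∧ i ≤ (n : ℤ) ∧ v = eVec i)}

/-- The action of a signed permutation on vectors: `w · e_i = e_{w(i)}`. -/
def actB (w : Equiv.Perm ℤ) (v : ℤ → ℤ) : ℤ → ℤ := fun t => v (w⁻¹ t)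

/-- The inversion set `Inv(w) = {α ∈ Φ⁺ : w⁻¹ · α ∈ -Φ⁺}`. -/
def InvSet (n : ℕ) (w : Equiv.Perm ℤ) : Set (ℤ → ℤ) :=
  {α | α ∈ PosRoots n ∧ -(actB w⁻¹ α) ∈ PosRoots n}

/-- The simple roots: `α_0 = e_1` and `α_a = e_{a+1} - e_a` for `a ≥ 1`. -/
def alphaRoot (a : ℕ) : ℤ → ℤ :=
  if a = 0 then eVec 1 else eVec ((a : ℤ) + 1) - eVec (a : ℤ)

/-- The reflection order of a word: `reflOrder L t = γ_{t+1} = s_{a_1} ⋯ s_{a_t} · α_{a_{t+1}}`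
(0-indexed). -/
def reflOrder (L : List ℕ) (t : ℕ) : ℤ → ℤ :=
  actB (wordProd (L.take t)) (alphaRoot (L.getD t 0))

/-- The trapezoid `Z(d,r) = (r+2d-1, r+2d-3, …, r+1)`. -/
def Zlam (d r : ℕ) : ℕ → ℕ := fun i => r + 2 * d + 1 - 2 * i

/-- The labeling `f : D(Z(d,r)) → Φ⁺`. -/
def fLabel (d r : ℕ) (p : ℤ × ℤ) : ℤ → ℤ :=
  if p.2 ≤ 0 then eVec ((d : ℤ) + 1 - p.1) - eVec p.2
  else if p.2 ≤ (r : ℤ) then eVec ((d : ℤ) + 1 - p.1) + eVec (p.2 + (d : ℤ))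
  else eVec ((d : ℤ) + 1 - p.1) - eVec (p.2 - (r : ℤ))

/-- The extended labeling `f̃`, with `f̃(i, i - d - 1) = 2 e_{d+1-i}`. -/
def fExtLabel (d r : ℕ) (p : ℤ × ℤ) : ℤ → ℤ :=
  if p.2 = p.1 - ((d : ℤ) + 1) then (2 : ℤ) • eVec ((d : ℤ) + 1 - p.1)
  else fLabel d r p

/-- `w` is the signed permutation `w^{(d,r)} ∈ W(B_{d+r})`, i.e.
`w(i) = d + i` for `1 ≤ i ≤ r` and `w(i) = -(i - r)` for `r < i ≤ d + r`. -/
def IsWdr (d r : ℕ) (w : Equiv.Perm ℤ) : Prop :=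
  IsSignedPerm (d + r) w ∧
    (∀ i : ℤ, 1 ≤ i → i ≤ (r : ℤ) → w i = (d : ℤ) + i) ∧
    (∀ i : ℤ, (r : ℤ) < i → i ≤ (d : ℤ) + (r : ℤ) → w i = -(i - r))


/-- `x` lies strictly between `y` and `z` (i.e. `min(y,z) < x < max(y,z)`). -/
def Between (x y z : ℕ) : Prop := (y < x ∧ x < z) ∨ (z < x ∧ x < y)

/-- A nonempty list is unimodal: strictly decreasing down to its minimum
(at 0-indexed position `k`), then strictly increasing. -/
def Unimodal (L : List ℕ) : Prop :=
  ∃ k : ℕ, k < L.length ∧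
    (∀ a b : ℕ, a < b → b ≤ k → L.getD b 0 < L.getD a 0) ∧
    (∀ a b : ℕ, k ≤ a → a < b → b < L.length → L.getD a 0 < L.getD b 0)

/-- Row `i` of the distinguished tableau of shape `Z(d,r)`:
`(r+d-i, …, r+1, 0, 1, …, r+d-i)`. -/
def rowWord (d r i : ℕ) : List ℕ :=
  (List.range (r + 2 * (d - i) + 1)).map fun t =>
    if t < d - i then r + (d - i) - t else t - (d - i)

/-- The reading word `π(T) = T_d T_{d-1} ⋯ T_1` of the distinguished tableau of
shape `Z(d,r)`. -/
def piWord (d r : ℕ) : List ℕ :=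
  (List.range d).flatMap fun k => rowWord d r (d - k)

/-- `μ_i = Z(d,r)_i - λ_i`. -/
def muF (d r : ℕ) (lam : ℕ → ℕ) (i : ℕ) : ℕ := r + 2 * d + 1 - 2 * i - lam i

/-- `σ_i = μ_1 + ⋯ + μ_i`. -/
def sigmaF (d r : ℕ) (lam : ℕ → ℕ) (i : ℕ) : ℕ := ∑ t ∈ Finset.Icc 1 i, muF d r lam t

/-- `ν_i = min{μ_i, …, μ_d}`. -/
noncomputable def nuF (d r : ℕ) (lam : ℕ → ℕ) (i : ℕ) : ℕ :=
  sInf {m : ℕ | ∃ j : ℕ, i ≤ j ∧ j ≤ d ∧ m = muF d r lam j}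

/-- The word `a^λ`: the concatenation over `i = 1, …, d` of the increasing runs
`(d+r-i-μ_i+1, …, d+r-i)`. -/
def aLamWord (d r : ℕ) (lam : ℕ → ℕ) : List ℕ :=
  (List.range d).flatMap fun k =>
    (List.range (muF d r lam (k + 1))).map fun t =>
      d + r - (k + 1) - muF d r lam (k + 1) + 1 + t

/-- Row `i` of the tableau `P(w^λ)`: entries `P(i,c) = c` for `c ≥ 0` and
`P(i,c) = r - c - ν_{d+1+c}` for `c < 0`. -/
noncomputable def rowWordP (d r : ℕ) (lam : ℕ → ℕ) (i : ℕ) : List ℕ :=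
  (List.range (lam i)).map fun t =>
    if t < d - i then r + (d - i) - t - nuF d r lam (i + 1 + t) else t - (d - i)

/-- The reading word `π(P(w^λ))`. -/
noncomputable def piWordP (d r : ℕ) (lam : ℕ → ℕ) : List ℕ :=
  (List.range d).flatMap fun k => rowWordP d r lam (d - k)

/-- The shape obtained from `λ` by adding one box at the end of row `i`. -/
def stepShape (lam : ℕ → ℕ) (i : ℕ) : ℕ → ℕ :=
  fun t => if t = i then lam i + 1 else lam t

/-- The box-adding map `f_i` on fillings: swap columns `j = λ_i + i - d` and `j + 1`
(in rows `1, …, i-1`), and put the value `N + 1` in the new box `(i, j)`. -/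
def addBox (d : ℕ) (lam : ℕ → ℕ) (i : ℕ) (N : ℕ) (B : ℤ × ℤ → ℕ) : ℤ × ℤ → ℕ :=
  fun p =>
    if p = ((i : ℤ), (lam i : ℤ) + (i : ℤ) - (d : ℤ)) then N + 1
    else if 1 ≤ p.1 ∧ p.1 < (i : ℤ) ∧ p.2 = (lam i : ℤ) + (i : ℤ) - (d : ℤ) then
      B (p.1, p.2 + 1)
    else if 1 ≤ p.1 ∧ p.1 < (i : ℤ) ∧ p.2 = (lam i : ℤ) + (i : ℤ) - (d : ℤ) + 1 then
      B (p.1, p.2 - 1)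
    else B p

/-- Successively apply the box-adding maps along a list of row indices,
tracking the current shape. -/
def FmapAux (d : ℕ) : List ℕ → (ℕ → ℕ) → (ℤ × ℤ → ℕ) → (ℤ × ℤ → ℕ)
  | [], _, B => B
  | i :: rest, lam, B => FmapAux d rest (stepShape lam i) (addBox d lam i (sizeP d lam) B)

/-- The shape after successively adding boxes along a list of row indices. -/
def shapeAux : List ℕ → (ℕ → ℕ) → (ℕ → ℕ)
  | [], lam => lam
  | i :: rest, lam => shapeAux rest (stepShape lam i)

/-- The list of row indices `1^{μ_1} 2^{μ_2} ⋯ d^{μ_d}` used to pad `λ` to `Z(d,r)`. -/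
def rowsList (d r : ℕ) (lam : ℕ → ℕ) : List ℕ :=
  (List.range d).flatMap fun k => List.replicate (muF d r lam (k + 1)) (k + 1)

/-- `BS(Z(d,r))|_λ`: balanced tableaux of shape `Z(d,r)` such that for each
`i ∈ {1,…,d}` the entries `N + σ_{i-1} + 1, …, N + σ_i` all occur in row `i`. -/
def BSRestricted (d r : ℕ) (lam : ℕ → ℕ) : Set (ℤ × ℤ → ℕ) :=
  {T | IsBalanced d (Zlam d r) T ∧ ∀ i : ℕ, 1 ≤ i → i ≤ d →
    ∀ k : ℕ, sizeP d lam + sigmaF d r lam (i - 1) + 1 ≤ k →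
      k ≤ sizeP d lam + sigmaF d r lam i →
      ∃ c : ℤ, ((i : ℤ), c) ∈ Diagram d (Zlam d r) ∧ T ((i : ℤ), c) = k}

/-- `w ∈ W(B_n)` pattern embeds the signed pattern `v` (given as its one-line
notation, a list of nonzero integers). -/
def PatternEmbeds (n : ℕ) (w : Equiv.Perm ℤ) (v : List ℤ) : Prop :=
  ∃ idx : Fin v.length → ℤ, StrictMono idx ∧
    (∀ j, 1 ≤ idx j ∧ idx j ≤ (n : ℤ)) ∧
    (∀ j, 0 < w (idx j) ↔ 0 < v.get j) ∧
    (∀ j k, |w (idx j)| < |w (idx k)| ↔ |v.get j| < |v.get k|)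


/-! ### Helper lemmas -/

def loB (a : ℕ) : ℤ := if a = 0 then -1 else a

lemma sB_zero_apply (x : ℤ) : sB 0 x = if x = 1 then -1 else if x = -1 then 1 else x := by
  simp only [sB, if_true, Equiv.swap_apply_def]

lemma sB_pos_apply (a : ℕ) (ha : a ≠ 0) (x : ℤ) : sB a x =
    if x = a then (a : ℤ) + 1 else if x = a + 1 then (a : ℤ) else
    if x = -a then -(a : ℤ) - 1 else if x = -a - 1 then -(a : ℤ) else x := by
  have : (0 : ℤ) < a := by omega
  simp only [sB, if_neg ha, Equiv.Perm.mul_apply, Equiv.swap_apply_def]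
  split_ifs <;> omega

lemma sB_sB (a : ℕ) (x : ℤ) : sB a (sB a x) = x := by
  by_cases ha : a = 0
  · subst ha
    simp only [sB_zero_apply]
    split_ifs <;> first | omega | simp_all
  · simp only [sB_pos_apply a ha]
    split_ifs <;> omega

lemma sB_mul_self (a : ℕ) : sB a * sB a = 1 := by
  ext x; simp [sB_sB]

lemma sB_neg (a : ℕ) (x : ℤ) : sB a (-x) = - sB a x := by
  by_cases ha : a = 0
  · subst ha
    simp only [sB_zero_apply]
    split_ifs <;> omega
  · simp only [sB_pos_apply a ha]
    split_ifs <;> omega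

lemma sB_signed (n a : ℕ) (ha : a < n) : IsSignedPerm n (sB a) := by
  refine ⟨sB_neg a, fun i hi => ?_⟩
  have h : (n : ℤ) < i ∨ (n : ℤ) < -i := lt_abs.mp hi
  by_cases h0 : a = 0
  · subst h0
    rw [sB_zero_apply]
    split_ifs <;> omega
  · rw [sB_pos_apply a h0]
    split_ifs <;> omega

lemma signed_mul {n : ℕ} {u v : Equiv.Perm ℤ} (hu : IsSignedPerm n u) (hv : IsSignedPerm n v) :
    IsSignedPerm n (u * v) := by
  refine ⟨fun i => ?_, fun i hi => ?_⟩
  · rw [Equiv.Perm.mul_apply, hv.1, hu.1, Equiv.Perm.mul_apply]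
  · rw [Equiv.Perm.mul_apply, hv.2 i hi, hu.2 i hi]

lemma signed_one (n : ℕ) : IsSignedPerm n 1 := ⟨fun _ => rfl, fun _ _ => rfl⟩

lemma wordProd_append (L M : List ℕ) : wordProd (L ++ M) = wordProd L * wordProd M := by
  simp [wordProd]

lemma wordProd_single (a : ℕ) : wordProd [a] = sB a := by simp [wordProd]

lemma wordProd_nil : wordProd [] = 1 := rfl

lemma wordProd_signed (n : ℕ) (L : List ℕ) (h : ∀ a ∈ L, a < n) :
    IsSignedPerm n (wordProd L) := by
  induction L with
  | nil => exact signed_one n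
  | cons a L ih =>
    have : wordProd (a :: L) = sB a * wordProd L := by simp [wordProd]
    rw [this]
    exact signed_mul (sB_signed n a (h a (by simp))) (ih fun b hb => h b (by simp [hb]))

lemma wordProd_mul_reverse (L : List ℕ) : wordProd L * wordProd L.reverse = 1 := by
  induction L with
  | nil => rfl
  | cons a L ih =>
    have : wordProd (a :: L) = sB a * wordProd L := by simp [wordProd]
    rw [this, List.reverse_cons, wordProd_append, wordProd_single]
    calc sB a * wordProd L * (wordProd L.reverse * sB a)
        = sB a * (wordProd L * wordProd L.reverse) * sB a := by group
      _ = 1 := by rw [ih, mul_one, sB_mul_self]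

/-- Position pairs. -/
noncomputable def PP (n : ℕ) : Finset (ℤ × ℤ) :=
  (Finset.Icc (1 : ℤ) n ×ˢ Finset.Icc (-(n : ℤ)) n).filter
    (fun p => -p.1 ≤ p.2 ∧ p.2 < p.1 ∧ p.2 ≠ 0)

/-- Inversion number; the pair is `(j, i)` with `i < j`. -/
noncomputable def invN (n : ℕ) (w : Equiv.Perm ℤ) : ℕ := ∑ p ∈ PP n, if w p.1 < w p.2 then 1 else 0

lemma mem_PP (n : ℕ) (p : ℤ × ℤ) :
    p ∈ PP n ↔ 1 ≤ p.1 ∧ p.1 ≤ n ∧ -p.1 ≤ p.2 ∧ p.2 < p.1 ∧ p.2 ≠ 0 := by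
  simp only [PP, Finset.mem_filter, Finset.mem_product, Finset.mem_Icc]
  omega

def phiB (a : ℕ) (p : ℤ × ℤ) : ℤ × ℤ :=
  if p.1 = (a : ℤ) + 1 ∧ p.2 = -(a : ℤ) then p else (sB a p.1, sB a p.2)

lemma phiB_mem (n a : ℕ) (p : ℤ × ℤ) (ha : a < n)
    (hp : p ∈ (PP n).erase ((a : ℤ) + 1, loB a)) :
    phiB a p ∈ (PP n).erase ((a : ℤ) + 1, loB a) := by
  obtain ⟨j, i⟩ := p
  simp only [Finset.mem_erase, mem_PP, ne_eq, Prod.mk.injEq, phiB, loB] at hp ⊢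
  by_cases h0 : a = 0
  · subst h0
    simp only [sB_zero_apply] at *
    split_ifs at * <;> simp at * <;> omega
  · simp only [sB_pos_apply a h0, if_neg h0] at *
    split_ifs at * <;> simp at * <;> omega

lemma phiB_phiB (n a : ℕ) (p : ℤ × ℤ) (ha : a < n)
    (hp : p ∈ (PP n).erase ((a : ℤ) + 1, loB a)) : phiB a (phiB a p) = p := by
  obtain ⟨j, i⟩ := p
  by_cases h : j = (a : ℤ) + 1 ∧ i = -(a : ℤ)
  · simp [phiB, h]
  · have h2 : ¬ (sB a j = (a : ℤ) + 1 ∧ sB a i = -(a : ℤ)) := by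
      simp only [Finset.mem_erase, mem_PP, ne_eq, Prod.mk.injEq, loB] at hp
      by_cases h0 : a = 0
      · subst h0
        simp only [sB_zero_apply] at *
        split_ifs at * <;> simp at * <;> omega
      · simp only [sB_pos_apply a h0, if_neg h0] at *
        split_ifs at * <;> omega
    simp only [phiB, if_neg h, if_neg h2, sB_sB]

lemma sB_hi (a : ℕ) : sB a ((a : ℤ) + 1) = loB a := by
  by_cases h0 : a = 0
  · subst h0; simp [sB_zero_apply, loB]
  · simp [sB_pos_apply a h0, loB, h0]

lemma sB_lo (a : ℕ) : sB a (loB a) = (a : ℤ) + 1 := by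
  rw [← sB_hi, sB_sB]

lemma invN_step (n a : ℕ) (ha : a < n) (w : Equiv.Perm ℤ) (hw : ∀ i : ℤ, w (-i) = -(w i)) :
    invN n (w * sB a) + (if w ((a : ℤ) + 1) < w (loB a) then 1 else 0) =
      invN n w + (if w (loB a) < w ((a : ℤ) + 1) then 1 else 0) := by
  have hmem : ((a : ℤ) + 1, loB a) ∈ PP n := by
    rw [mem_PP]
    simp only [loB]
    split_ifs <;> omega
  have key : ∑ p ∈ (PP n).erase ((a : ℤ) + 1, loB a),
        (if (w * sB a) p.1 < (w * sB a) p.2 then 1 else 0) =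
      ∑ p ∈ (PP n).erase ((a : ℤ) + 1, loB a), (if w p.1 < w p.2 then 1 else 0) := by
    refine Finset.sum_bij' (fun p _ => phiB a p) (fun p _ => phiB a p)
      (fun p hp => phiB_mem n a p ha hp) (fun p hp => phiB_mem n a p ha hp)
      (fun p hp => phiB_phiB n a p ha hp) (fun p hp => phiB_phiB n a p ha hp) ?_
    rintro ⟨j, i⟩ hp
    simp only [phiB, Equiv.Perm.mul_apply]
    by_cases h : j = (a : ℤ) + 1 ∧ i = -(a : ℤ)
    · have h0 : a ≠ 0 := by
        rintro rfl
        simp only [Finset.mem_erase, mem_PP] at hp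
        simp at h
        omega
      obtain ⟨rfl, rfl⟩ := h
      have e1 : sB a ((a : ℤ) + 1) = a := by rw [sB_hi]; simp [loB, h0]
      have e2 : sB a (-(a : ℤ)) = -((a : ℤ) + 1) := by
        rw [sB_neg]
        have := sB_lo a
        simp only [loB, if_neg h0] at this
        rw [this]
      simp only [and_self, if_true, e1, e2, hw]
      congr 1
      apply propext
      constructor <;> intro h <;> omega
    · simp only [if_neg h]
      by_cases hc : w (sB a j) < w (sB a i)
      · exact (if_pos hc).trans (if_pos hc).symm
      · exact (if_neg hc).trans (if_neg hc).symm
  unfold invN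
  rw [← Finset.add_sum_erase _ _ hmem, ← Finset.add_sum_erase _ _ hmem, key]
  simp only [Equiv.Perm.mul_apply, sB_hi, sB_lo]
  ring

lemma lo_ne (a : ℕ) : loB a ≠ (a : ℤ) + 1 := by
  simp only [loB]; split_ifs <;> omega

lemma invN_desc (n a : ℕ) (ha : a < n) (w : Equiv.Perm ℤ) (hw : ∀ i : ℤ, w (-i) = -(w i))
    (h : w ((a : ℤ) + 1) < w (loB a)) : invN n (w * sB a) + 1 = invN n w := by
  have := invN_step n a ha w hw
  rw [if_pos h, if_neg (not_lt.mpr h.le)] at this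
  simpa using this

lemma invN_le (n a : ℕ) (ha : a < n) (w : Equiv.Perm ℤ) (hw : ∀ i : ℤ, w (-i) = -(w i)) :
    invN n (w * sB a) ≤ invN n w + 1 := by
  have := invN_step n a ha w hw
  split_ifs at this <;> omega

lemma invN_one (n : ℕ) : invN n 1 = 0 := by
  unfold invN
  refine Finset.sum_eq_zero fun p hp => ?_
  rw [mem_PP] at hp
  rw [if_neg]
  simp
  omega

lemma invN_word_le (n : ℕ) (L : List ℕ) : (∀ a ∈ L, a < n) → ∀ w : Equiv.Perm ℤ,
    IsSignedPerm n w → invN n (w * wordProd L) ≤ invN n w + L.length := by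
  induction L with
  | nil => intro _ w _; simp [wordProd_nil]
  | cons a L ih =>
    intro h w hw
    have e : wordProd (a :: L) = sB a * wordProd L := by simp [wordProd]
    have ha : a < n := h a (by simp)
    rw [e, ← mul_assoc]
    have h1 := ih (fun b hb => h b (by simp [hb])) _ (signed_mul hw (sB_signed n a ha))
    have h2 := invN_le n a ha w hw.1
    simp only [List.length_cons]
    omega

lemma exists_desc (n : ℕ) (w : Equiv.Perm ℤ) (hw : IsSignedPerm n w)
    (h : ∀ a : ℕ, a < n → w (loB a) < w ((a : ℤ) + 1)) : w = 1 := by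
  have w0 : w 0 = 0 := by have := hw.1 0; simp at this; omega
  have lower : ∀ k : ℕ, k ≤ n → (k : ℤ) ≤ w k := by
    intro k
    induction k with
    | zero => intro _; simp [w0]
    | succ k ih =>
      intro hk
      have h1 := h k (by omega)
      have h2 := ih (by omega)
      by_cases h0 : k = 0
      · subst h0
        simp only [loB, if_true, hw.1] at h1
        simp at h1 ⊢
        omega
      · simp only [loB, if_neg h0] at h1
        push_cast
        omega
  have bd : ∀ x : ℤ, |x| ≤ n → |w x| ≤ n := by
    intro x hx
    by_contra hc
    push Not at hc
    have := hw.2 _ hc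
    have := w.injective this
    rw [this] at hc
    omega
  have upper : ∀ m : ℕ, m < n → w ((n - m : ℕ) : ℤ) ≤ ((n - m : ℕ) : ℤ) := by
    intro m
    induction m with
    | zero =>
      intro _
      have := bd n (by simp)
      have := abs_le.mp this
      simpa using this.2
    | succ m ih =>
      intro hm
      have h1 := h (n - (m + 1)) (by omega)
      have h2 := ih (by omega)
      have h3 : n - (m + 1) ≠ 0 := by omega
      have h4 : ((n - (m + 1) : ℕ) : ℤ) + 1 = ((n - m : ℕ) : ℤ) := by omega
      simp only [loB, if_neg h3, h4] at h1
      omega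
  have pos : ∀ k : ℕ, w k = k := by
    intro k
    by_cases hk : n < k
    · exact hw.2 _ (by simp; omega)
    · by_cases h0 : k = 0
      · subst h0; simpa using w0
      · have h1 := lower k (by omega)
        have h2 := upper (n - k) (by omega)
        have h3 : n - (n - k) = k := by omega
        rw [h3] at h2
        omega
  ext x
  obtain ⟨k, rfl | rfl⟩ := x.eq_nat_or_neg
  · simp [pos]
  · simp [hw.1, pos]

lemma exists_word (n : ℕ) : ∀ (m : ℕ) (w : Equiv.Perm ℤ), IsSignedPerm n w → invN n w = m →
    ∃ L : List ℕ, (∀ a ∈ L, a < n) ∧ wordProd L = w ∧ L.length = m := by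
  intro m
  induction m with
  | zero =>
    intro w hw h0
    refine ⟨[], by simp, ?_, rfl⟩
    rw [wordProd_nil]
    refine (exists_desc n w hw fun a ha => ?_).symm
    by_contra hc
    have hne : w (loB a) ≠ w ((a : ℤ) + 1) := fun h => lo_ne a (w.injective h)
    have := invN_desc n a ha w hw.1 (by omega)
    omega
  | succ m ih =>
    intro w hw hm
    have : ∃ a : ℕ, a < n ∧ w ((a : ℤ) + 1) < w (loB a) := by
      by_contra hc
      push Not at hc
      have : w = 1 := exists_desc n w hw fun a ha => by
        have hne : w (loB a) ≠ w ((a : ℤ) + 1) := fun h => lo_ne a (w.injective h)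
        have := hc a ha
        omega
      rw [this, invN_one] at hm
      omega
    obtain ⟨a, ha, hd⟩ := this
    have h1 := invN_desc n a ha w hw.1 hd
    obtain ⟨L, hL, hp, hl⟩ := ih (w * sB a) (signed_mul hw (sB_signed n a ha)) (by omega)
    refine ⟨L ++ [a], ?_, ?_, by simp [hl]⟩
    · intro b hb
      rcases List.mem_append.mp hb with hb | hb
      · exact hL b hb
      · simp at hb; omega
    · rw [wordProd_append, hp, wordProd_single, mul_assoc, sB_mul_self, mul_one]

lemma lengthB_eq (n : ℕ) (w : Equiv.Perm ℤ) (hw : IsSignedPerm n w) :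
    lengthB n w = invN n w := by
  have hmem : invN n w ∈ {m : ℕ | ∃ L : List ℕ, (∀ a ∈ L, a < n) ∧ wordProd L = w ∧ L.length = m} :=
    exists_word n _ w hw rfl
  apply le_antisymm
  · exact Nat.sInf_le hmem
  · refine le_csInf ⟨_, hmem⟩ ?_
    rintro m ⟨L, hL, hp, rfl⟩
    have := invN_word_le n L hL 1 (signed_one n)
    rw [one_mul, hp, invN_one] at this
    omega

lemma sum_odd (d r : ℕ) : ∑ k ∈ Finset.Icc 1 d, (r + 2 * k - 1) = d * (d + r) := by
  induction d with
  | zero => simp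
  | succ d ih =>
    rw [Finset.sum_Icc_succ_top (by omega), ih]
    have : r + 2 * (d + 1) - 1 = r + 2 * d + 1 := by omega
    rw [this]; ring

lemma invN_wdr (d r : ℕ) (w : Equiv.Perm ℤ) (hw : IsWdr d r w) :
    invN (d + r) w = d * (d + r) := by
  obtain ⟨⟨hodd, -⟩, hA, hB⟩ := hw
  have hA' : ∀ i : ℤ, 1 ≤ -i → -i ≤ (r : ℤ) → w i = -((d : ℤ) - i) := by
    intro i h1 h2
    have := hA (-i) h1 h2
    rw [hodd] at this
    omega
  have hB' : ∀ i : ℤ, (r : ℤ) < -i → -i ≤ (d : ℤ) + (r : ℤ) → w i = (-i - r) := by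
    intro i h1 h2
    have := hB (-i) h1 h2
    rw [hodd] at this
    omega
  have hset : (PP (d + r)).filter (fun p => w p.1 < w p.2) =
      (Finset.Icc 1 d).biUnion (fun k : ℕ =>
        (Finset.Icc (-((r : ℤ) + k)) (-((r : ℤ) + 1)) ∪ Finset.Icc 1 ((r : ℤ) + k - 1)).map
          (Function.Embedding.sectR ((r : ℤ) + k) ℤ)) := by
    ext ⟨j, i⟩
    simp only [Finset.mem_filter, mem_PP, Finset.mem_biUnion, Finset.mem_map, Finset.mem_union,
      Finset.mem_Icc, Function.Embedding.sectR_apply, Prod.mk.injEq]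
    constructor
    · rintro ⟨⟨h1, h2, h3, h4, h5⟩, h6⟩
      push_cast at h2
      have hj : (r : ℤ) < j := by
        by_contra hc
        rw [hA j h1 (by omega)] at h6
        rcases lt_or_gt_of_ne h5 with hi | hi
        · rw [hA' i (by omega) (by omega)] at h6; omega
        · rw [hA i (by omega) (by omega)] at h6; omega
      refine ⟨(j - r).toNat, by omega, i, ?_, by omega, rfl⟩
      rw [hB j hj (by omega)] at h6
      by_contra hc
      rw [hA' i (by omega) (by omega)] at h6
      omega
    · rintro ⟨k, hk, i', hi, rfl, rfl⟩
      push_cast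
      refine ⟨by omega, ?_⟩
      rw [hB _ (by omega) (by omega)]
      rcases hi with hi | hi
      · rw [hB' _ (by omega) (by omega)]; omega
      · by_cases hr : i' ≤ r
        · rw [hA _ (by omega) (by omega)]; omega
        · rw [hB _ (by omega) (by omega)]; omega
  unfold invN
  rw [← Finset.card_filter, hset, Finset.card_biUnion, ← sum_odd]
  · refine Finset.sum_congr rfl fun k hk => ?_
    rw [Finset.mem_Icc] at hk
    rw [Finset.card_map, Finset.card_union_of_disjoint, Int.card_Icc, Int.card_Icc]
    · omega
    · rw [Finset.disjoint_left]
      intro x hx hy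
      simp only [Finset.mem_Icc] at hx hy
      omega
  · intro k _ l _ hkl
    simp only [Function.onFun]
    rw [Finset.disjoint_left]
    rintro ⟨j, i⟩ hx hy
    simp only [Finset.mem_map, Function.Embedding.sectR_apply, Prod.mk.injEq] at hx hy
    obtain ⟨_, _, h1, _⟩ := hx
    obtain ⟨_, _, h2, _⟩ := hy
    omega

/-- One run. -/
lemma run_step (n : ℕ) (q : ℕ) (hq : q < n) (v : Equiv.Perm ℤ) (hv : IsSignedPerm n v) (x : ℤ)
    (hx : v ((q : ℤ) + 1) = x) (hlt : ∀ p : ℤ, 1 ≤ p → p ≤ q → x < v p) :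
    ∀ (m b : ℕ), b + m = q + 1 → 1 ≤ b →
      let u := v * wordProd (List.range' b m).reverse
      IsSignedPerm n u ∧ u b = x ∧ (∀ p : ℤ, 1 ≤ p → p ≤ (q : ℤ) + 1 → p ≠ b → x < u p) ∧
      (∀ p : ℤ, (q : ℤ) + 1 < p → u p = v p) ∧ invN n u + m = invN n v := by
  intro m
  induction m with
  | zero =>
    intro b hb _
    have : b = q + 1 := by omega
    subst this
    simp only [List.range'_zero, List.reverse_nil, wordProd_nil, mul_one]
    refine ⟨hv, by simpa using hx, ?_, fun _ _ => by trivial, by trivial⟩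
    intro p h1 h2 h3
    push_cast at h3
    exact hlt p h1 (by omega)
  | succ m ih =>
    intro b hb hb1
    obtain ⟨i1, i2, i3, i4, i5⟩ := ih (b + 1) (by omega) (by omega)
    have hb0 : b ≠ 0 := by omega
    rw [List.range'_succ, List.reverse_cons, wordProd_append, wordProd_single, ← mul_assoc]
    set u := v * wordProd (List.range' (b + 1) m).reverse with hu
    push_cast at i2 i3
    have hbn : b < n := by omega
    refine ⟨signed_mul i1 (sB_signed n b hbn), ?_, ?_, ?_, ?_⟩
    · rw [Equiv.Perm.mul_apply, sB_pos_apply b hb0, if_pos rfl, i2]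
    · intro p h1 h2 h3
      rw [Equiv.Perm.mul_apply, sB_pos_apply b hb0]
      split_ifs
      · omega
      · exact i3 _ (by omega) (by omega) (by omega)
      · omega
      · omega
      · exact i3 _ (by omega) (by omega) (by omega)
    · intro p h1
      rw [Equiv.Perm.mul_apply, sB_pos_apply b hb0, ← i4 p h1]
      split_ifs <;> first | omega | rfl
    · have := invN_desc n b hbn u i1.1 (by
        rw [i2]
        simp only [loB, if_neg hb0]
        exact i3 _ (by omega) (by omega) (by omega))
      omega

lemma all_runs (d r : ℕ) (mu : ℕ → ℕ) (hmu : ∀ i, 1 ≤ i → i ≤ d → mu i + i ≤ d + r)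
    (w : Equiv.Perm ℤ) (hw : IsWdr d r w) : ∀ (m k : ℕ), k + m = d →
      let u := w * wordProd ((List.range' k m).flatMap fun k =>
        (List.range (mu (k + 1))).map fun t => d + r - (k + 1) - mu (k + 1) + 1 + t).reverse
      IsSignedPerm (d + r) u ∧
      (∀ p : ℤ, 1 ≤ p → p ≤ (r : ℤ) + m → -((m : ℤ) + 1) < u p) ∧
      (∀ p : ℤ, (r : ℤ) + m < p → p ≤ (d : ℤ) + r → u p = -(p - r)) ∧
      invN (d + r) u + ∑ i ∈ Finset.Ico k d, mu (i + 1) = invN (d + r) w := by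
  intro m
  induction m with
  | zero =>
    intro k hk
    have : k = d := by omega
    subst this
    simp only [List.range'_zero, List.flatMap_nil, List.reverse_nil, wordProd_nil, mul_one,
      Finset.Ico_self, Finset.sum_empty, add_zero, Nat.cast_zero]
    refine ⟨hw.1, ?_, fun p h1 h2 => hw.2.2 p (by omega) h2, by trivial⟩
    intro p h1 h2
    rw [hw.2.1 p h1 h2]
    omega
  | succ m ih =>
    intro k hk
    obtain ⟨i1, i2, i3, i4⟩ := ih (k + 1) (by omega)
    have hm := hmu (k + 1) (by omega) (by omega)
    rw [List.range'_succ, List.flatMap_cons, List.reverse_append, wordProd_append, ← mul_assoc,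
      ← List.range'_eq_map_range]
    set u := w * wordProd ((List.range' (k + 1) m).flatMap fun k =>
        (List.range (mu (k + 1))).map fun t => d + r - (k + 1) - mu (k + 1) + 1 + t).reverse with hu
    have hrun := run_step (d + r) (r + m) (by omega) u i1 (-((m : ℤ) + 1))
      (by rw [i3 _ (by push_cast; omega) (by push_cast; omega)]; push_cast; ring)
      (fun p h1 h2 => i2 p h1 (by push_cast at h2; omega))
      (mu (k + 1)) (d + r - (k + 1) - mu (k + 1) + 1) (by omega) (by omega)
    obtain ⟨j1, j2, j3, j4, j5⟩ := hrun
    refine ⟨j1, ?_, ?_, ?_⟩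
    · intro p h1 h2
      push_cast at h2
      by_cases hp : p = ((d + r - (k + 1) - mu (k + 1) + 1 : ℕ) : ℤ)
      · rw [hp, j2]; push_cast; omega
      · have := j3 p h1 (by push_cast; omega) hp
        refine lt_trans ?_ this
        push_cast
        omega
    · intro p h1 h2
      push_cast at h1
      rw [j4 p (by push_cast; omega)]
      exact i3 p (by omega) h2
    · rw [Finset.sum_eq_sum_Ico_succ_bot (by omega)]
      omega

lemma lam_lower (d : ℕ) (lam : ℕ → ℕ) (hlam : IsStrictPartition d lam) :
    ∀ m i : ℕ, 1 ≤ i → i + m = d → m + 1 ≤ lam i := by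
  intro m
  induction m with
  | zero => intro i _ h; have := hlam.2; simp at h; subst h; omega
  | succ m ih =>
    intro i h1 h
    have h2 := ih (i + 1) (by omega) (by omega)
    have h3 := hlam.1 i h1 (by omega)
    omega

lemma sum_Z (d r : ℕ) : ∑ i ∈ Finset.Icc 1 d, (r + 2 * d + 1 - 2 * i) = d * (d + r) := by
  rw [← sum_odd]
  refine Finset.sum_nbij' (fun i => d + 1 - i) (fun i => d + 1 - i) ?_ ?_ ?_ ?_ ?_ <;>
  · intro i hi
    simp only [Finset.mem_Icc] at *
    omega

/-- `a^λ` is a reduced word of `(w^λ)⁻¹ w^{(d,r)}`, and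
`ℓ(w^λ) = |λ| = N`. -/
theorem aLam_reduced_and_length (d r : ℕ) (hd : 1 ≤ d)
    (lam : ℕ → ℕ) (hlam : IsStrictPartition d lam)
    (hsub : ∀ i : ℕ, 1 ≤ i → i ≤ d → lam i ≤ Zlam d r i)
    (w : Equiv.Perm ℤ) (hw : IsWdr d r w) :
    IsReducedWord (d + r) ((w * wordProd (aLamWord d r lam).reverse)⁻¹ * w)
        (aLamWord d r lam) ∧
      lengthB (d + r) (w * wordProd (aLamWord d r lam).reverse) = sizeP d lam := by
  have hmu : ∀ i, 1 ≤ i → i ≤ d → muF d r lam i + i ≤ d + r := by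
    intro i h1 h2
    have := lam_lower d lam hlam (d - i) i h1 (by omega)
    have := hsub i h1 h2
    simp only [Zlam] at this
    simp only [muF]
    omega
  have hruns := all_runs d r (muF d r lam) hmu w hw d 0 (by omega)
  rw [← List.range_eq_range'] at hruns
  change IsSignedPerm (d + r) (w * wordProd (aLamWord d r lam).reverse) ∧ _ ∧ _ ∧
    invN (d + r) (w * wordProd (aLamWord d r lam).reverse) + _ = _ at hruns
  obtain ⟨hs, -, -, hinv⟩ := hruns
  rw [invN_wdr d r w hw] at hinv
  have hlen : (aLamWord d r lam).length = ∑ i ∈ Finset.Ico 0 d, muF d r lam (i + 1) := by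
    rw [← Finset.range_eq_Ico]
    have hl : ∀ (f : ℕ → ℕ) (m : ℕ), ((List.range m).map f).sum = ∑ i ∈ Finset.range m, f i := by
      intro f m
      induction m with
      | zero => simp
      | succ m ih => rw [List.range_succ, Finset.sum_range_succ, List.map_append, List.sum_append, ih]; simp
    rw [← hl]
    simp [aLamWord, List.length_flatMap]
  have hletters : ∀ a ∈ aLamWord d r lam, a < d + r := by
    intro a ha
    simp only [aLamWord, List.mem_flatMap, List.mem_map, List.mem_range] at ha
    obtain ⟨k, hk, t, ht, rfl⟩ := ha
    have := hmu (k + 1) (by omega) (by omega)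
    omega
  have hsum : sizeP d lam + ∑ i ∈ Finset.Ico 0 d, muF d r lam (i + 1) = d * (d + r) := by
    rw [← sum_Z, sizeP, Finset.sum_Ico_add' (fun i => muF d r lam i) 0 d 1]
    have : Finset.Ico (0 + 1) (d + 1) = Finset.Icc 1 d := by
      ext i; simp only [Finset.mem_Ico, Finset.mem_Icc]; omega
    rw [this, ← Finset.sum_add_distrib]
    refine Finset.sum_congr rfl fun i hi => ?_
    rw [Finset.mem_Icc] at hi
    have := hsub i hi.1 hi.2
    simp only [Zlam] at this
    simp only [muF]
    omega
  have hprod : (w * wordProd (aLamWord d r lam).reverse)⁻¹ * w = wordProd (aLamWord d r lam) := by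
    have := wordProd_mul_reverse (aLamWord d r lam)
    have h2 := eq_inv_of_mul_eq_one_left this
    rw [h2]; group
  refine ⟨⟨hletters, hprod.symm, ?_⟩, ?_⟩
  · rw [hprod]
    have hsa := wordProd_signed (d + r) _ hletters
    apply le_antisymm
    · rw [lengthB_eq _ _ hsa]
      obtain ⟨L, hL, hp, hl⟩ := exists_word (d + r) _ _ hsa rfl
      have := invN_word_le (d + r) L hL _ hs
      have e : w * wordProd (aLamWord d r lam).reverse * wordProd L = w := by
        rw [hp, ← hprod]; group
      rw [e, invN_wdr d r w hw] at this
      omega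
    · exact Nat.sInf_le ⟨_, hletters, rfl, rfl⟩
  · rw [lengthB_eq _ _ hs]
    omega

end BST
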